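/- Let G be a finite abelian group and d ≥ 1 an integer. Then there is an isomorphism of abelian groups Hmg^d(G, ℚ/ℤ) ≅ ⊕_{p | |G|} Hmg^d(G_p, ℚ/ℤ)^{q(G/G_p)}, where the sum runs over primes p dividing the order of G, G_p denotes the p-Sylow subgroup of G, q(G/G_p) denotes the number of cyclic subgroups of the quotient group G/G_p, and the exponent denotes a direct sum of q(G/G_p) copies. -/

import Mathlib

open scoped DirectSum

noncomputable section

/-- `ℚ/ℤ`, the quotient of the rationals by the integers. -/
abbrev QZ : Type := AddCircle (1 : ℚ)

/-- The group of homogeneous functions of degree `d` from `G` to `H`, i.e. functions `f` with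
`f (n • x) = n ^ d • f x` for every `x : G` and every integer `n` coprime to the order of `x`,
as an additive subgroup of `G → H` under pointwise addition. -/
def Hmg (d : ℕ) (G H : Type*) [AddCommGroup G] [AddCommGroup H] : AddSubgroup (G → H) where
  carrier := {f | ∀ (x : G) (n : ℤ), IsCoprime n (addOrderOf x : ℤ) → f (n • x) = n ^ d • f x}
  zero_mem' := by intro x n _; simp
  add_mem' := by
    intro f g hf hg x n h
    simp only [Pi.add_apply, hf x n h, hg x n h, smul_add]
  neg_mem' := by
    intro f hf x n h
    simp only [Pi.neg_apply, hf x n h, smul_neg]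

/-- The `p`-primary component (the Sylow `p`-subgroup, for `p` prime and `G` finite)
of an abelian group `G`: the elements killed by a power of `p`. -/
def primaryPart (p : ℕ) (G : Type*) [AddCommGroup G] : AddSubgroup G where
  carrier := {x | ∃ n : ℕ, p ^ n • x = 0}
  zero_mem' := ⟨0, by simp⟩
  add_mem' := by
    rintro a b ⟨m, hm⟩ ⟨n, hn⟩
    refine ⟨m + n, ?_⟩
    have ha : p ^ (m + n) • a = 0 := by rw [pow_add, mul_comm, mul_smul, hm, smul_zero]
    have hb : p ^ (m + n) • b = 0 := by rw [pow_add, mul_smul, hn, smul_zero]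
    rw [smul_add, ha, hb, add_zero]
  neg_mem' := by
    rintro a ⟨m, hm⟩
    exact ⟨m, by rw [smul_neg, hm, neg_zero]⟩

/-- The number of cyclic subgroups of an abelian group `A`. -/
def numCyclic (A : Type*) [AddGroup A] : ℕ :=
  Nat.card {C : AddSubgroup A // IsAddCyclic C}

/-!
A homogeneous function `f` of degree `d` is determined by its values at chosen generators of the
cyclic subgroups of `G`. At a generator of order `m`, the possible values are the elements fixed by
`n ^ d` for all `n ≡ 1` modulo `m`, i.e. the torsion of the ideal `K(m)` of `ℤ` generated by the
`n ^ d - 1`. A maximal ideal containing `K(m)` contains `m`, so `K(a)` and `K(b)` are comaximal for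
coprime `a` and `b`, and `K(m)` contains a power of `m`; hence `K(ab) = K(a) ∩ K(b)` by the Chinese
remainder theorem. So the values at a cyclic subgroup `C` split over the primes into values at the
intersections `C ∩ G_p`. Since `C ↦ (C ∩ G_p, image of C in G ⧸ G_p)` is a bijection onto pairs
of cyclic subgroups, the values at the `C ∩ G_p` form one homogeneous function on `G_p` for each
cyclic subgroup of `G ⧸ G_p`.
-/

section PowSubOneIdeal

variable {R : Type*} [CommRing R] {d : ℕ} {I J : Ideal R}

/-- The ideal generated by the differences `u ^ d - 1` for `u ≡ 1` modulo `I`. For `I = mℤ` it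
annihilates the values of homogeneous functions of degree `d` at elements of order `m`. -/
def powSubOneIdeal (d : ℕ) (I : Ideal R) : Ideal R :=
  Ideal.span ((fun u ↦ u ^ d - 1) '' {u | u - 1 ∈ I})

theorem pow_sub_one_mem_powSubOneIdeal {u : R} (hu : u - 1 ∈ I) :
    u ^ d - 1 ∈ powSubOneIdeal d I :=
  Ideal.subset_span ⟨u, hu, rfl⟩

theorem powSubOneIdeal_le_iff :
    powSubOneIdeal d I ≤ J ↔ ∀ u : R, u - 1 ∈ I → u ^ d - 1 ∈ J := by
  rw [powSubOneIdeal, Ideal.span_le, Set.image_subset_iff]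
  rfl

theorem powSubOneIdeal_mono (h : I ≤ J) : powSubOneIdeal d I ≤ powSubOneIdeal d J :=
  powSubOneIdeal_le_iff.mpr fun _ hu ↦ pow_sub_one_mem_powSubOneIdeal (h hu)

theorem pow_sub_pow_mem_powSubOneIdeal {a u w : R} (ha : a * u - 1 ∈ I) (huw : u - w ∈ I) :
    u ^ d - w ^ d ∈ powSubOneIdeal d I := by
  have haw : a * w - 1 ∈ I := by
    rw [show a * w - 1 = a * u - 1 - a * (u - w) by ring]
    exact I.sub_mem ha (I.mul_mem_left a huw)
  rw [show u ^ d - w ^ d = w ^ d * ((a * u) ^ d - 1) - u ^ d * ((a * w) ^ d - 1) by ring]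
  exact sub_mem (Ideal.mul_mem_left _ _ (pow_sub_one_mem_powSubOneIdeal ha))
    (Ideal.mul_mem_left _ _ (pow_sub_one_mem_powSubOneIdeal haw))

theorem le_of_powSubOneIdeal_le (hd : d ≠ 0) {M : Ideal R} (hM : M.IsMaximal)
    (h : powSubOneIdeal d I ≤ M) : I ≤ M := by
  by_contra hIM
  -- If `I` and `M` were comaximal, some `u ≡ 1` modulo `I` would lie in `M`, and so would `1`.
  have hcop : IsCoprime I M :=
    Ideal.isCoprime_iff_codisjoint.mpr (hM.out.not_le_iff_codisjoint.mp hIM).symm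
  obtain ⟨i, hi, u, hu, hiu⟩ := Ideal.isCoprime_iff_exists.mp hcop
  have hu1 : u - 1 ∈ I := by
    rw [← hiu, sub_add_cancel_right]
    exact I.neg_mem hi
  have hpow : u ^ d - 1 ∈ M := h (pow_sub_one_mem_powSubOneIdeal hu1)
  have hone : (1 : R) ∈ M := (M.sub_mem_iff_right (M.pow_mem_of_mem hu d hd.bot_lt)).mp hpow
  exact hM.ne_top ((Ideal.eq_top_iff_one M).mpr hone)

theorem isCoprime_powSubOneIdeal (hd : d ≠ 0) (hIJ : IsCoprime I J) :
    IsCoprime (powSubOneIdeal d I) (powSubOneIdeal d J) := by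
  rw [Ideal.isCoprime_iff_sup_eq] at hIJ ⊢
  by_contra hne
  obtain ⟨M, hM, hle⟩ := Ideal.exists_le_maximal _ hne
  have hI : I ≤ M := le_of_powSubOneIdeal_le hd hM (le_sup_left.trans hle)
  have hJ : J ≤ M := le_of_powSubOneIdeal_le hd hM (le_sup_right.trans hle)
  exact hM.ne_top (top_le_iff.mp (hIJ ▸ sup_le hI hJ))

theorem le_radical_powSubOneIdeal [IsJacobsonRing R] (hd : d ≠ 0) (I : Ideal R) :
    I ≤ (powSubOneIdeal d I).radical := by
  rw [Ideal.radical_eq_jacobson]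
  exact le_sInf fun M hM ↦ le_of_powSubOneIdeal_le hd hM.2 hM.1

theorem powSubOneIdeal_le_sup_pow (hIJ : IsCoprime I J) (n : ℕ) :
    powSubOneIdeal d I ≤ powSubOneIdeal d (I ⊓ J) ⊔ I ^ (n + 1) := by
  rw [powSubOneIdeal_le_iff]
  intro u hu
  obtain ⟨i, hi, j, hj, hij⟩ := Ideal.isCoprime_iff_exists.mp (hIJ.pow_left (m := n + 1))
  -- By the Chinese remainder theorem, `w ≡ u` modulo `I ^ (n + 1)` and `w ≡ 1` modulo `J`.
  let w := i + u * j
  have huw : u - w ∈ I ^ (n + 1) := by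
    rw [show u - w = (u - 1) * i by linear_combination -u * hij]
    exact Ideal.mul_mem_left _ _ hi
  have hwI : w - 1 ∈ I := by
    rw [show w - 1 = (u - 1) - (u - w) by ring]
    exact I.sub_mem hu (Ideal.pow_le_self n.succ_ne_zero huw)
  have hwJ : w - 1 ∈ J := by
    rw [show w - 1 = (u - 1) * j by linear_combination hij]
    exact J.mul_mem_left _ hj
  have hpow : u ^ d - w ^ d ∈ I ^ (n + 1) :=
    Ideal.mem_of_dvd _ (sub_dvd_pow_sub_pow u w d) huw
  rw [show u ^ d - 1 = (w ^ d - 1) + (u ^ d - w ^ d) by ring]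
  exact Submodule.add_mem_sup (pow_sub_one_mem_powSubOneIdeal ⟨hwI, hwJ⟩) hpow

theorem ideal_sup_mul_sup_le (K I J : Ideal R) : (K ⊔ I) * (K ⊔ J) ≤ K ⊔ I * J := by
  rw [Ideal.sup_mul, Ideal.mul_sup I]
  have hK : K * (K ⊔ J) ≤ K := Ideal.mul_le_left
  have hIK : I * K ≤ K := Ideal.mul_le_right
  exact sup_le (hK.trans le_sup_left) (sup_le_sup_right hIK _)

theorem powSubOneIdeal_inf [IsNoetherianRing R] [IsJacobsonRing R] (hd : d ≠ 0)
    (hIJ : IsCoprime I J) :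
    powSubOneIdeal d (I ⊓ J) = powSubOneIdeal d I ⊓ powSubOneIdeal d J := by
  refine le_antisymm
    (le_inf (powSubOneIdeal_mono inf_le_left) (powSubOneIdeal_mono inf_le_right)) ?_
  let K := powSubOneIdeal d (I ⊓ J)
  obtain ⟨n, hn⟩ : ∃ n, (I * J) ^ n ≤ K := by
    rw [Ideal.mul_eq_inf_of_isCoprime hIJ]
    exact Ideal.exists_pow_le_of_le_radical_of_fg (le_radical_powSubOneIdeal hd _)
      (IsNoetherian.noetherian _)
  have hI : powSubOneIdeal d I ≤ K ⊔ I ^ (n + 1) := powSubOneIdeal_le_sup_pow hIJ n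
  have hJ : powSubOneIdeal d J ≤ K ⊔ J ^ (n + 1) := by
    simpa only [inf_comm] using powSubOneIdeal_le_sup_pow (d := d) hIJ.symm n
  calc powSubOneIdeal d I ⊓ powSubOneIdeal d J
      = powSubOneIdeal d I * powSubOneIdeal d J :=
        (Ideal.mul_eq_inf_of_isCoprime (isCoprime_powSubOneIdeal hd hIJ)).symm
    _ ≤ (K ⊔ I ^ (n + 1)) * (K ⊔ J ^ (n + 1)) := Ideal.mul_mono hI hJ
    _ ≤ K ⊔ (I * J) ^ (n + 1) := by
        rw [mul_pow]
        exact ideal_sup_mul_sup_le K _ _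
    _ ≤ K := sup_le le_rfl ((Ideal.pow_le_pow_right n.le_succ).trans hn)

theorem powSubOneIdeal_finsetInf [IsNoetherianRing R] [IsJacobsonRing R] (hd : d ≠ 0)
    {ι : Type*} {s : Finset ι} {I : ι → Ideal R}
    (hI : (s : Set ι).Pairwise (Function.onFun IsCoprime I)) :
    powSubOneIdeal d (s.inf I) = s.inf fun i ↦ powSubOneIdeal d (I i) := by
  classical
  induction s using Finset.induction_on with
  | empty =>
    have hzero : (0 : R) ^ d - 1 ∈ powSubOneIdeal d ⊤ := pow_sub_one_mem_powSubOneIdeal trivial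
    rw [zero_pow hd, zero_sub, neg_mem_iff] at hzero
    exact (Ideal.eq_top_iff_one _).mpr hzero
  | insert i s hi ih =>
    rw [Finset.coe_insert, Set.pairwise_insert_of_notMem hi] at hI
    have hcop : IsCoprime (I i) (s.inf I) := by
      rw [Finset.inf_eq_iInf, Ideal.isCoprime_iff_sup_eq]
      exact Ideal.sup_iInf_eq_top fun j hj ↦ Ideal.isCoprime_iff_sup_eq.mp (hI.2 j hj).1
    rw [Finset.inf_insert, Finset.inf_insert, powSubOneIdeal_inf hd hcop, ih hI.1]

end PowSubOneIdeal

instance : IsJacobsonRing ℤ := by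
  refine isJacobsonRing_iff_prime_eq.mpr fun P hP ↦ ?_
  obtain rfl | hP0 := eq_or_ne P ⊥
  · refine eq_bot_iff.mpr fun x hx ↦ ?_
    have hunit : IsUnit (x * x + 1) := Ideal.mem_jacobson_bot.mp hx x
    have : x * x = 0 := by
      rcases Int.isUnit_iff.mp hunit with h | h <;> nlinarith [mul_self_nonneg x]
    exact mul_self_eq_zero.mp this
  · have := hP.isMaximal hP0
    exact Ideal.jacobson_eq_self_of_isMaximal

section TorsionBySet

open Submodule

variable {R M ι : Type*} [CommRing R] [AddCommGroup M] [Module R M] {I : ι → Ideal R}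

theorem iSupIndep_torsionBySet_ideal [Finite ι]
    (hI : Pairwise (Function.onFun IsCoprime I)) :
    iSupIndep fun i ↦ torsionBySet R M (I i) := by
  classical
  have := Fintype.ofFinite ι
  refine iSupIndep_iff_supIndep_univ.mpr (supIndep_torsionBySet_ideal fun i _ j _ hij ↦ ?_)
  exact Ideal.isCoprime_iff_sup_eq.mp (hI hij)

theorem range_coeLinearMap_torsionBySet [Fintype ι] [DecidableEq ι]
    (hI : Pairwise (Function.onFun IsCoprime I)) :
    LinearMap.range (DirectSum.coeLinearMap fun i ↦ torsionBySet R M (I i)) =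
      torsionBySet R M (Finset.univ.inf I : Ideal R) := by
  have hsup : ((Finset.univ : Finset ι) : Set ι).Pairwise fun i j ↦ I i ⊔ I j = ⊤ :=
    fun i _ j _ hij ↦ Ideal.isCoprime_iff_sup_eq.mp (hI hij)
  rw [DirectSum.range_coeLinearMap, Finset.inf_eq_iInf,
    ← iSup_torsionBySet_ideal_eq_torsionBySet_iInf hsup]
  simp only [Finset.mem_univ, iSup_pos]

variable (R M) in
open scoped Classical in
/-- The torsion of an intersection of pairwise coprime ideals as a product, for modules that need
not be torsion themselves. -/
def torsionBySetInfEquivPi [Fintype ι] (hI : Pairwise (Function.onFun IsCoprime I)) :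
    torsionBySet R M (Finset.univ.inf I : Ideal R) ≃ₗ[R] ∀ i, torsionBySet R M (I i) :=
  (LinearEquiv.ofEq _ _ (range_coeLinearMap_torsionBySet hI)).symm ≪≫ₗ
    (LinearEquiv.ofInjective _ (iSupIndep_torsionBySet_ideal hI).dfinsupp_lsum_injective).symm ≪≫ₗ
    DirectSum.linearEquivFunOnFintype R ι _

end TorsionBySet

section PowFixed

open Submodule

variable {d : ℕ} {A : Type*} [AddCommGroup A] {m : ℕ} {v : A}

variable (d A m) in
/-- The subgroup of `A` fixed by `n ^ d` for every `n ≡ 1` modulo `m`: the possible values of a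
homogeneous function of degree `d` at an element of order `m`. It is encoded as the torsion of an
ideal of `ℤ` so that its decomposition over coprime factors of `m` is an identity of ideals. -/
def powFixed : Submodule ℤ A :=
  torsionBySet ℤ A (powSubOneIdeal d (Ideal.span {(m : ℤ)}))

theorem mem_powFixed_iff :
    v ∈ powFixed d A m ↔ ∀ n : ℤ, (m : ℤ) ∣ n - 1 → n ^ d • v = v := by
  rw [powFixed, powSubOneIdeal, ← torsionBySet_eq_torsionBySet_span, mem_torsionBySet_iff]
  simp only [Subtype.forall, Set.forall_mem_image, Set.mem_ofPred_eq, Ideal.mem_span_singleton,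
    sub_smul, one_smul, sub_eq_zero]

theorem pow_zsmul_eq_of_mem_powFixed (hv : v ∈ powFixed d A m) {n k : ℤ}
    (hn : IsCoprime n (m : ℤ)) (hnk : (m : ℤ) ∣ n - k) : n ^ d • v = k ^ d • v := by
  obtain ⟨a, b, hab⟩ := hn
  have ha : a * n - 1 ∈ Ideal.span {(m : ℤ)} :=
    Ideal.mem_span_singleton.mpr ⟨-b, by linear_combination hab⟩
  have hmem : n ^ d - k ^ d ∈ powSubOneIdeal d (Ideal.span {(m : ℤ)}) :=
    pow_sub_pow_mem_powSubOneIdeal ha (Ideal.mem_span_singleton.mpr hnk)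
  rw [← sub_eq_zero, ← sub_smul]
  exact (mem_torsionBySet_iff _ _).mp hv ⟨_, hmem⟩

theorem pairwise_isCoprime_span_natCast {ι : Type*} {a : ι → ℕ}
    (ha : Pairwise (Function.onFun Nat.Coprime a)) :
    Pairwise (Function.onFun IsCoprime fun i ↦ Ideal.span {(a i : ℤ)}) :=
  fun _ _ hij ↦
    (Ideal.isCoprime_span_singleton_iff _ _).mpr (Nat.isCoprime_iff_coprime.mpr (ha hij))

theorem powFixed_prod (hd : d ≠ 0) {ι : Type*} [Fintype ι] {a : ι → ℕ}
    (ha : Pairwise (Function.onFun Nat.Coprime a)) :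
    powFixed d A (∏ i, a i) = torsionBySet ℤ A
      (Finset.univ.inf fun i ↦ powSubOneIdeal d (Ideal.span {(a i : ℤ)}) : Ideal ℤ) := by
  have hspan : Ideal.span {((∏ i, a i : ℕ) : ℤ)} =
      Finset.univ.inf fun i ↦ Ideal.span {(a i : ℤ)} := by
    rw [Nat.cast_prod, Ideal.finset_inf_span_singleton]
    exact fun i _ j _ hij ↦ Nat.isCoprime_iff_coprime.mpr (ha hij)
  rw [powFixed, hspan,
    powSubOneIdeal_finsetInf hd ((pairwise_isCoprime_span_natCast ha).set_pairwise _)]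

variable (A) in
/-- The decomposition of `powFixed` over a factorization of the modulus into pairwise coprime
factors. -/
def powFixedProdEquiv (hd : d ≠ 0) {ι : Type*} [Fintype ι] {a : ι → ℕ}
    (ha : Pairwise (Function.onFun Nat.Coprime a)) :
    powFixed d A (∏ i, a i) ≃ₗ[ℤ] ∀ i, powFixed d A (a i) :=
  LinearEquiv.ofEq _ _ (powFixed_prod hd ha) ≪≫ₗ
    torsionBySetInfEquivPi ℤ A fun _ _ hij ↦
      isCoprime_powSubOneIdeal hd (pairwise_isCoprime_span_natCast ha hij)

end PowFixed

section CyclicSubgroup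

variable {G : Type*} [AddGroup G]

variable (G) in
/-- The type of cyclic subgroups of `G`, which `numCyclic` counts. -/
abbrev CyclicSubgroup : Type _ := {C : AddSubgroup G // IsAddCyclic C}

namespace CyclicSubgroup

/-- The cyclic subgroup generated by an element. -/
def zmultiples (x : G) : CyclicSubgroup G := ⟨AddSubgroup.zmultiples x, inferInstance⟩

theorem exists_zmultiples_eq (C : CyclicSubgroup G) : ∃ x, AddSubgroup.zmultiples x = C.1 :=
  (AddSubgroup.isAddCyclic_iff_exists_zmultiples_eq_top C.1).mp C.2

/-- A chosen generator of a cyclic subgroup, at which homogeneous functions are evaluated. -/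
def generator (C : CyclicSubgroup G) : G := C.exists_zmultiples_eq.choose

theorem zmultiples_generator (C : CyclicSubgroup G) : zmultiples C.generator = C :=
  Subtype.ext C.exists_zmultiples_eq.choose_spec

theorem addOrderOf_generator (C : CyclicSubgroup G) : addOrderOf C.generator = Nat.card C.1 := by
  rw [← Nat.card_zmultiples]
  exact congrArg (fun D : CyclicSubgroup G ↦ Nat.card D.1) C.zmultiples_generator

theorem zmultiples_eq_zmultiples_iff {x y : G} :
    zmultiples x = zmultiples y ↔ ∃ n : ℤ, IsCoprime n (addOrderOf x : ℤ) ∧ n • x = y := by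
  rw [zmultiples, zmultiples, Subtype.mk.injEq]
  constructor
  · intro h
    obtain ⟨n, rfl⟩ := AddSubgroup.mem_zmultiples_iff.mp (h ▸ AddSubgroup.mem_zmultiples y)
    have hx : x ∈ AddSubgroup.zmultiples (n • x) := h ▸ AddSubgroup.mem_zmultiples x
    exact ⟨n, Int.isCoprime_iff_gcd_eq_one.mpr (mem_zmultiples_zsmul_iff.mp hx), rfl⟩
  · rintro ⟨n, hn, rfl⟩
    refine le_antisymm ?_ (AddSubgroup.zmultiples_le.mpr (AddSubgroup.zsmul_mem_zmultiples x n))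
    exact AddSubgroup.zmultiples_le.mpr
      (mem_zmultiples_zsmul_iff.mpr (Int.isCoprime_iff_gcd_eq_one.mp hn))

theorem exists_zsmul_generator_eq (x : G) :
    ∃ n : ℤ, IsCoprime n (Nat.card (zmultiples x).1 : ℤ) ∧ n • (zmultiples x).generator = x := by
  rw [← addOrderOf_generator]
  exact zmultiples_eq_zmultiples_iff.mp (zmultiples_generator _)

end CyclicSubgroup

end CyclicSubgroup

namespace Hmg

variable {d : ℕ} {G A : Type*} [AddCommGroup G] [AddCommGroup A]

theorem apply_mem_powFixed (f : Hmg d G A) (x : G) : f.1 x ∈ powFixed d A (addOrderOf x) := by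
  refine mem_powFixed_iff.mpr fun n hn ↦ ?_
  obtain ⟨c, hc⟩ := hn
  have hcop : IsCoprime n (addOrderOf x : ℤ) := ⟨1, -c, by linear_combination hc⟩
  have hnx : n • x = x := by
    have hsub : (n - 1) • x = 0 := addOrderOf_dvd_iff_zsmul_eq_zero.mp ⟨c, hc⟩
    rwa [sub_smul, one_smul, sub_eq_zero] at hsub
  rw [← f.2 x n hcop, hnx]

/-- Restriction of a homogeneous function to the chosen generators of the cyclic subgroups. -/
def evalGenerator : Hmg d G A →+ ∀ C : CyclicSubgroup G, powFixed d A (Nat.card C.1) where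
  toFun f C := ⟨f.1 C.generator, C.addOrderOf_generator ▸ apply_mem_powFixed f C.generator⟩
  map_zero' := rfl
  map_add' _ _ := rfl

theorem evalGenerator_injective :
    Function.Injective (evalGenerator (d := d) (G := G) (A := A)) := by
  intro f g hfg
  ext x
  let C := CyclicSubgroup.zmultiples x
  have hC : f.1 C.generator = g.1 C.generator := congrArg Subtype.val (congrFun hfg C)
  obtain ⟨n, hn, hx⟩ := CyclicSubgroup.exists_zsmul_generator_eq x
  rw [← C.addOrderOf_generator] at hn
  calc f.1 x = n ^ d • f.1 C.generator := by rw [← f.2 _ n hn, hx]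
    _ = g.1 x := by rw [hC, ← g.2 _ n hn, hx]

/-- The function extending prescribed values at the generators of the cyclic subgroups: each `x` is
a multiple `n • C.generator` of the generator of the cyclic subgroup `C` it generates, and is sent
to `n ^ d • v C`. -/
def extend (v : ∀ C : CyclicSubgroup G, powFixed d A (Nat.card C.1)) (x : G) : A :=
  let C := CyclicSubgroup.zmultiples x
  (CyclicSubgroup.exists_zsmul_generator_eq x).choose ^ d • (v C : A)

theorem extend_zsmul_generator (v : ∀ C : CyclicSubgroup G, powFixed d A (Nat.card C.1))
    (C : CyclicSubgroup G) {n : ℤ} (hn : IsCoprime n (Nat.card C.1 : ℤ)) :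
    extend v (n • C.generator) = n ^ d • (v C : A) := by
  generalize hx : n • C.generator = x
  obtain rfl : C = CyclicSubgroup.zmultiples x := by
    rw [← C.zmultiples_generator]
    exact CyclicSubgroup.zmultiples_eq_zmultiples_iff.mpr ⟨n, C.addOrderOf_generator ▸ hn, hx⟩
  have hdvd {k : ℤ} (hk : k • (CyclicSubgroup.zmultiples x).generator = x) :
      (Nat.card (CyclicSubgroup.zmultiples x).1 : ℤ) ∣ k - n := by
    rw [← CyclicSubgroup.addOrderOf_generator, addOrderOf_dvd_iff_zsmul_eq_zero, sub_smul, hk, hx,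
      sub_self]
  obtain ⟨hk, hkx⟩ := (CyclicSubgroup.exists_zsmul_generator_eq x).choose_spec
  exact pow_zsmul_eq_of_mem_powFixed (v _).2 hk (hdvd hkx)

theorem extend_mem (v : ∀ C : CyclicSubgroup G, powFixed d A (Nat.card C.1)) :
    extend v ∈ Hmg d G A := by
  intro x n hn
  let C := CyclicSubgroup.zmultiples x
  obtain ⟨k, hk, hx⟩ := CyclicSubgroup.exists_zsmul_generator_eq x
  have hcard : addOrderOf x = Nat.card C.1 := (Nat.card_zmultiples x).symm
  rw [hcard] at hn
  calc extend v (n • x) = extend v ((n * k) • C.generator) := by rw [mul_smul, hx]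
    _ = n ^ d • k ^ d • (v C : A) := by
      rw [extend_zsmul_generator v C (hn.mul_left hk), mul_pow, mul_smul]
    _ = n ^ d • extend v x := by rw [← extend_zsmul_generator v C hk, hx]

theorem evalGenerator_surjective :
    Function.Surjective (evalGenerator (d := d) (G := G) (A := A)) := by
  refine fun v ↦ ⟨⟨extend v, extend_mem v⟩, funext fun C ↦ Subtype.ext ?_⟩
  have h := extend_zsmul_generator v C isCoprime_one_left
  rwa [one_smul, one_pow, one_smul] at h

variable (d G A) in
/-- Homogeneous functions are families of values at the generators of the cyclic subgroups. -/
def equivPi : Hmg d G A ≃+ ∀ C : CyclicSubgroup G, powFixed d A (Nat.card C.1) :=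
  AddEquiv.ofBijective evalGenerator ⟨evalGenerator_injective, evalGenerator_surjective⟩

end Hmg

namespace CyclicSubgroup

variable {G : Type*} [AddCommGroup G] (N : AddSubgroup G)

/-- The intersection of a cyclic subgroup with `N`, as a cyclic subgroup of `N`. -/
def restrict (C : CyclicSubgroup G) : CyclicSubgroup N :=
  ⟨C.1.addSubgroupOf N, by
    have := C.2
    exact isAddCyclic_of_injective (AddMonoidHom.addSubgroupComap N.subtype C.1)
      fun _ _ h ↦ Subtype.ext (Subtype.ext (congrArg (fun t : C.1 ↦ (t : G)) h))⟩

/-- The image of a cyclic subgroup in the quotient by `N`. -/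
def quotient (C : CyclicSubgroup G) : CyclicSubgroup (G ⧸ N) :=
  ⟨C.1.map (QuotientAddGroup.mk' N), by
    have := C.2
    exact isAddCyclic_of_surjective _ (AddMonoidHom.addSubgroupMap_surjective _ C.1)⟩

variable {N}

theorem mem_restrict {C : CyclicSubgroup G} {x : N} : x ∈ (C.restrict N).1 ↔ (x : G) ∈ C.1 :=
  Iff.rfl

end CyclicSubgroup

section Hall

variable {G : Type*} [AddCommGroup G] {N : AddSubgroup G}

theorem exists_zsmul_projection_of_coprime_index (hN : (Nat.card N).Coprime N.index) :
    ∃ u w : ℤ, u + w = 1 ∧ (∀ x : G, u • x ∈ N) ∧ ∀ x ∈ N, w • x = 0 := by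
  obtain ⟨a, b, hab⟩ := Nat.isCoprime_iff_coprime.mpr hN
  refine ⟨b * N.index, a * Nat.card N, by rw [add_comm, hab], fun x ↦ ?_, fun x hx ↦ ?_⟩
  · rw [mul_smul, natCast_zsmul]
    exact N.zsmul_mem (N.nsmul_index_mem x) b
  · have hcard : Nat.card N • (⟨x, hx⟩ : N) = 0 := card_nsmul_eq_zero'
    rw [mul_smul, natCast_zsmul, show Nat.card N • x = 0 from congrArg Subtype.val hcard,
      smul_zero]

namespace CyclicSubgroup

theorem le_of_restrict_le_of_quotient_le (hN : (Nat.card N).Coprime N.index)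
    {C D : CyclicSubgroup G} (hres : (C.restrict N).1 ≤ (D.restrict N).1)
    (hquot : (C.quotient N).1 ≤ (D.quotient N).1) : C.1 ≤ D.1 := by
  obtain ⟨u, w, huw, hu, hw⟩ := exists_zsmul_projection_of_coprime_index hN
  intro c hc
  have huc : u • c ∈ D.1 := hres (x := ⟨u • c, hu c⟩) (C.1.zsmul_mem hc u)
  obtain ⟨c', hc', hcc'⟩ := hquot (AddSubgroup.mem_map_of_mem _ hc)
  have hwc : w • c = w • c' := by
    rw [← sub_eq_zero, ← smul_sub]
    exact hw _ (QuotientAddGroup.eq_iff_sub_mem.mp hcc'.symm)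
  rw [← one_smul ℤ c, ← huw, add_smul, hwc]
  exact D.1.add_mem huc (D.1.zsmul_mem hc' w)

theorem exists_restrict_eq_and_quotient_eq (hN : (Nat.card N).Coprime N.index)
    (D : CyclicSubgroup N) (E : CyclicSubgroup (G ⧸ N)) :
    ∃ C : CyclicSubgroup G, C.restrict N = D ∧ C.quotient N = E := by
  obtain ⟨u, w, huw, hu, hw⟩ := exists_zsmul_projection_of_coprime_index hN
  obtain ⟨x, hx⟩ := D.exists_zmultiples_eq
  obtain ⟨y, hy⟩ := E.exists_zmultiples_eq
  obtain ⟨y, rfl⟩ := QuotientAddGroup.mk'_surjective N y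
  have hsmul {t : G} (ht : t ∈ N) : u • t = t := by
    rw [← add_zero (u • t), ← hw t ht, ← add_smul, huw, one_smul]
  have hproj : u • ((x : G) + w • y) = x := by
    rw [smul_add, hsmul x.2, smul_comm, hw _ (hu y), add_zero]
  refine ⟨zmultiples ((x : G) + w • y), Subtype.ext ?_, Subtype.ext ?_⟩
  · rw [← hx]
    ext t
    rw [mem_restrict, AddSubgroup.mem_zmultiples_iff]
    constructor
    · rintro ⟨n, hn : n • ((x : G) + w • y) = t⟩
      refine ⟨n, Subtype.ext ?_⟩
      calc n • (x : G) = u • n • ((x : G) + w • y) := by rw [smul_comm, hproj]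
        _ = t := by rw [hn, hsmul t.2]
    · rintro ⟨n, rfl⟩
      exact ⟨n * u, (mul_smul n u _).trans (congrArg (n • ·) hproj)⟩
  · rw [← hy]
    have hxy : (x : G) + w • y - y ∈ N := by
      rw [show (x : G) + w • y - y = x - u • y by
        rw [eq_sub_of_add_eq' huw, sub_smul, one_smul]
        abel]
      exact N.sub_mem x.2 (hu y)
    exact (AddMonoidHom.map_zmultiples _ _).trans
      (congrArg _ (QuotientAddGroup.eq_iff_sub_mem.mpr hxy))

theorem restrict_quotient_bijective (hN : (Nat.card N).Coprime N.index) :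
    Function.Bijective fun C : CyclicSubgroup G ↦ (C.restrict N, C.quotient N) := by
  refine ⟨fun C D h ↦ ?_, fun ⟨D, E⟩ ↦ ?_⟩
  · obtain ⟨hres, hquot⟩ := Prod.mk.inj h
    exact Subtype.ext (le_antisymm
      (le_of_restrict_le_of_quotient_le hN (hres ▸ le_rfl) (hquot ▸ le_rfl))
      (le_of_restrict_le_of_quotient_le hN (hres ▸ le_rfl) (hquot ▸ le_rfl)))
  · obtain ⟨C, hres, hquot⟩ := exists_restrict_eq_and_quotient_eq hN D E
    exact ⟨C, Prod.ext hres hquot⟩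

/-- A cyclic subgroup of `G` amounts to one of the quotient by a Hall subgroup and one of the Hall
subgroup. The pairs form a sigma type so that families indexed by them can be curried. -/
def equivSigma (hN : (Nat.card N).Coprime N.index) :
    CyclicSubgroup G ≃ (_ : CyclicSubgroup (G ⧸ N)) × CyclicSubgroup N :=
  (Equiv.ofBijective _ (restrict_quotient_bijective hN)).trans
    ((Equiv.prodComm _ _).trans (Equiv.sigmaEquivProd _ _).symm)

end CyclicSubgroup

variable (d : ℕ) (A : Type*) [AddCommGroup A]

/-- Values prescribed on the intersections of the cyclic subgroups with a Hall subgroup `N` amount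
to one homogeneous function on `N` for each cyclic subgroup of `G ⧸ N`. -/
def piRestrictEquiv (hN : (Nat.card N).Coprime N.index) :
    (∀ C : CyclicSubgroup G, powFixed d A (Nat.card (C.restrict N).1)) ≃+
      (CyclicSubgroup (G ⧸ N) → Hmg d N A) :=
  let values (ED : (_ : CyclicSubgroup (G ⧸ N)) × CyclicSubgroup N) :=
    powFixed d A (Nat.card ED.2.1)
  let e₁ : (∀ C : CyclicSubgroup G, powFixed d A (Nat.card (C.restrict N).1)) ≃ₗ[ℤ]
      ∀ ED, values ED :=
    LinearEquiv.piCongrLeft ℤ (fun ED ↦ values ED) (CyclicSubgroup.equivSigma hN)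
  let e₂ : (∀ ED, values ED) ≃ₗ[ℤ] ∀ E D, values ⟨E, D⟩ :=
    LinearEquiv.piCurry ℤ fun E D ↦ values ⟨E, D⟩
  (e₁.trans e₂).toAddEquiv.trans (AddEquiv.piCongrRight fun _ ↦ (Hmg.equivPi d N A).symm)

end Hall

section PrimaryPart

variable {G : Type*} [AddCommGroup G] [Finite G] {p : ℕ}

theorem exists_card_primaryPart_eq_pow (hp : p.Prime) :
    ∃ k, Nat.card (primaryPart p G) = p ^ k := by
  refine ⟨_, Nat.eq_prime_pow_of_unique_prime_dvd Nat.card_pos.ne' fun {q} hq hdvd ↦ ?_⟩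
  have : Fact q.Prime := ⟨hq⟩
  obtain ⟨⟨x, n, hx⟩, hord⟩ := exists_prime_addOrderOf_dvd_card' q hdvd
  have hqp : q ∣ p ^ n := hord ▸ addOrderOf_dvd_of_nsmul_eq_zero (Subtype.ext hx)
  exact (Nat.prime_dvd_prime_iff_eq hq hp).mp (hq.dvd_of_dvd_pow hqp)

theorem not_dvd_index_primaryPart (hp : p.Prime) : ¬ p ∣ (primaryPart p G).index := by
  intro hdvd
  have : Fact p.Prime := ⟨hp⟩
  obtain ⟨x, hord⟩ := exists_prime_addOrderOf_dvd_card' (G := G ⧸ primaryPart p G) p hdvd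
  obtain ⟨x, rfl⟩ := QuotientAddGroup.mk_surjective x
  have hpx : p • x ∈ primaryPart p G :=
    (QuotientAddGroup.eq_zero_iff _).mp (addOrderOf_dvd_iff_nsmul_eq_zero.mp hord.dvd)
  obtain ⟨n, hn⟩ := hpx
  have hx : x ∈ primaryPart p G := ⟨n + 1, by rw [pow_succ, mul_smul, hn]⟩
  rw [(QuotientAddGroup.eq_zero_iff x).mpr hx, addOrderOf_zero] at hord
  exact hp.one_lt.ne hord

theorem coprime_card_index_primaryPart (hp : p.Prime) :
    (Nat.card (primaryPart p G)).Coprime (primaryPart p G).index := by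
  obtain ⟨k, hk⟩ := exists_card_primaryPart_eq_pow (G := G) hp
  rw [hk]
  exact (hp.coprime_iff_not_dvd.mpr (not_dvd_index_primaryPart hp)).pow_left k

theorem card_primaryPart (hp : p.Prime) :
    Nat.card (primaryPart p G) = p ^ (Nat.card G).factorization p := by
  obtain ⟨k, hk⟩ := exists_card_primaryPart_eq_pow (G := G) hp
  rw [hk, ← (primaryPart p G).card_mul_index, hk, Nat.factorization_mul
    (pow_ne_zero k hp.ne_zero) AddSubgroup.index_ne_zero_of_finite, Finsupp.add_apply,
    hp.factorization_pow, Finsupp.single_eq_same,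
    Nat.factorization_eq_zero_of_not_dvd (not_dvd_index_primaryPart hp), add_zero]

namespace CyclicSubgroup

theorem card_restrict_primaryPart (hp : p.Prime) (C : CyclicSubgroup G) :
    Nat.card (C.restrict (primaryPart p G)).1 = p ^ (Nat.card C.1).factorization p := by
  rw [← card_primaryPart hp]
  exact Nat.card_congr
    { toFun := fun x ↦ ⟨⟨x.1.1, x.2⟩, x.1.2.imp fun _ h ↦ Subtype.ext h⟩
      invFun := fun x ↦ ⟨⟨x.1.1, x.2.imp fun _ h ↦ congrArg Subtype.val h⟩, x.1.2⟩ }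

theorem coprime_card_restrict_primaryPart {q : ℕ} (hp : p.Prime) (hq : q.Prime) (hpq : p ≠ q)
    (C : CyclicSubgroup G) :
    (Nat.card (C.restrict (primaryPart p G)).1).Coprime
      (Nat.card (C.restrict (primaryPart q G)).1) := by
  rw [card_restrict_primaryPart hp, card_restrict_primaryPart hq]
  exact Nat.coprime_pow_primes _ _ hp hq hpq

end CyclicSubgroup

end PrimaryPart

section Decomposition

theorem prod_pow_factorization_of_dvd {m n : ℕ} [Fintype {p : ℕ // p.Prime ∧ p ∣ n}] (hn : n ≠ 0)
    (hmn : m ∣ n) : ∏ p : {p : ℕ // p.Prime ∧ p ∣ n}, p.1 ^ m.factorization p.1 = m := by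
  have hmem (p : ℕ) : p ∈ n.primeFactors ↔ p.Prime ∧ p ∣ n := by
    rw [Nat.mem_primeFactors, and_iff_left hn]
  calc ∏ p : {p : ℕ // p.Prime ∧ p ∣ n}, p.1 ^ m.factorization p.1
      = ∏ p ∈ n.primeFactors, p ^ m.factorization p :=
        (Finset.prod_subtype _ hmem fun p ↦ p ^ m.factorization p).symm
    _ = m.factorization.prod (· ^ ·) :=
      (Finsupp.prod_of_support_subset _ (Nat.primeFactors_mono hmn hn) _ fun p _ ↦ pow_zero p).symm
    _ = m := Nat.prod_factorization_pow_eq_self (ne_zero_of_dvd_ne_zero hn hmn)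

variable {G : Type*} [AddCommGroup G] [Finite G]

theorem CyclicSubgroup.prod_card_restrict_primaryPart
    [Fintype {p : ℕ // p.Prime ∧ p ∣ Nat.card G}] (C : CyclicSubgroup G) :
    ∏ p : {p : ℕ // p.Prime ∧ p ∣ Nat.card G}, Nat.card (C.restrict (primaryPart p.1 G)).1 =
      Nat.card C.1 := by
  rw [← prod_pow_factorization_of_dvd Nat.card_pos.ne' C.1.card_addSubgroup_dvd_card]
  exact Finset.prod_congr rfl fun p _ ↦ C.card_restrict_primaryPart p.2.1

variable (A : Type*) [AddCommGroup A] {d : ℕ}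

/-- The primary decomposition of the values of homogeneous functions on a cyclic subgroup. -/
def powFixedPrimaryEquiv [Fintype {p : ℕ // p.Prime ∧ p ∣ Nat.card G}] (hd : d ≠ 0)
    (C : CyclicSubgroup G) :
    powFixed d A (Nat.card C.1) ≃ₗ[ℤ] ∀ p : {p : ℕ // p.Prime ∧ p ∣ Nat.card G},
      powFixed d A (Nat.card (C.restrict (primaryPart p.1 G)).1) :=
  LinearEquiv.ofEq _ _ (congrArg (powFixed d A) C.prod_card_restrict_primaryPart.symm) ≪≫ₗ
    powFixedProdEquiv A hd fun p q hpq ↦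
      C.coprime_card_restrict_primaryPart p.2.1 q.2.1 (Subtype.coe_injective.ne hpq)

end Decomposition

theorem stmt16_general (G A : Type*) [AddCommGroup G] [Finite G] [AddCommGroup A] (d : ℕ)
    (hd : 1 ≤ d) :
    Nonempty ((Hmg d G A) ≃+
      ⨁ p : {p : ℕ // p.Prime ∧ p ∣ Nat.card G},
        (Fin (numCyclic (G ⧸ primaryPart p.1 G)) → (Hmg d (primaryPart p.1 G) A))) := by
  let P := {p : ℕ // p.Prime ∧ p ∣ Nat.card G}
  have : Fintype P := Fintype.subtype (Nat.card G).primeFactors fun p ↦ by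
    rw [Nat.mem_primeFactors, and_iff_left Nat.card_pos.ne']
  let V (p : P) (C : CyclicSubgroup G) := powFixed d A (Nat.card (C.restrict (primaryPart p.1 G)).1)
  let byPrime : Hmg d G A ≃+ ∀ C p, V p C := (Hmg.equivPi d G A).trans
    (AddEquiv.piCongrRight fun C ↦ (powFixedPrimaryEquiv A (Nat.ne_of_gt hd) C).toAddEquiv)
  let swap : (∀ C p, V p C) ≃+ ∀ p C, V p C :=
    { Equiv.piComm fun C p ↦ V p C with map_add' := fun _ _ ↦ rfl }
  let copies (p : P) : (∀ C, V p C) ≃+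
      (Fin (numCyclic (G ⧸ primaryPart p.1 G)) → Hmg d (primaryPart p.1 G) A) :=
    (piRestrictEquiv d A (coprime_card_index_primaryPart p.2.1)).trans
      (LinearEquiv.funCongrLeft ℤ _ (Finite.equivFin _).symm).toAddEquiv
  exact ⟨byPrime.trans (swap.trans ((AddEquiv.piCongrRight copies).trans
    (DirectSum.addEquivProd _).symm))⟩

theorem stmt16 (G : Type*) [AddCommGroup G] [Finite G] (d : ℕ) (hd : 1 ≤ d) :
    Nonempty ((Hmg d G QZ) ≃+
      ⨁ p : {p : ℕ // p.Prime ∧ p ∣ Nat.card G},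
        (Fin (numCyclic (G ⧸ primaryPart p.1 G)) → (Hmg d (primaryPart p.1 G) QZ))) := by
  exact stmt16_general G QZ d hd

end
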